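/- arXiv:1711.04253 — 7 statements merged into one kernel-verified Lean document; each statement's English description precedes it below -/
import Mathlib

section
/- The family consisting of the elements S_{e_i} S_{e_j}^* for (i,j) ∈ Λ together with the elements p_v for v ∈ I is linearly independent over ℂ. -/
/-!
Each element of the family is detected by a compression `x ↦ a * x * b` that annihilates all the
others: `S i * star (S j)` by `x ↦ star (S i) * x * S j`, and `p v`, for a sink `v`, by
`x ↦ p v * x * p v`. The annihilation comes from the orthogonality relations together with
`p v * S i = 0` for a sink `v`. The compression of a nonzero `S i * star (S j)` is nonzero because
multiplying it by `S i` on the left and by `star (S j)` on the right recovers `S i * star (S j)`,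
the edges being partial isometries.
-/

theorem linearIndependent_of_pairwise_linearMap_apply_eq_zero {ι R M N : Type*} [Ring R]
    [IsDomain R] [AddCommGroup M] [Module R M] [AddCommMonoid N] [Module R N]
    [Module.IsTorsionFree R N] {f : ι → M} (φ : ι → M →ₗ[R] N)
    (hφ : Pairwise fun x y => φ x (f y) = 0) (hφ_self : ∀ x, φ x (f x) ≠ 0) :
    LinearIndependent R f := by
  refine linearIndependent_iff'.mpr fun F g hg x hx => ?_
  have hφg : g x • φ x (f x) = 0 := by
    rw [← F.sum_eq_single_of_mem (f := fun y => g y • φ x (f y)) x hx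
      fun y _ hy => by rw [hφ hy.symm, smul_zero]]
    simpa only [map_sum, map_smul, map_zero] using congrArg (φ x) hg
  exact (smul_eq_zero.mp hφg).resolve_right (hφ_self x)

section PartialIsometry

variable {E A : Type*}

theorem star_mul_mul_star_mul_ne_zero [SemigroupWithZero A] [StarMul A] {a b : A}
    (ha : a * star a * a = a) (hb : b * star b * b = b) (hab : a * star b ≠ 0) :
    star a * (a * star b) * b ≠ 0 := by
  intro h
  have hb_star : star b * b * star b = star b := by
    simpa only [star_mul, star_star, mul_assoc] using congrArg star hb
  refine hab ?_
  calc
    a * star b = a * star a * a * (star b * b * star b) := by rw [ha, hb_star]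
    _ = a * (star a * (a * star b) * b) * star b := by simp only [mul_assoc]
    _ = 0 := by rw [h, mul_zero, zero_mul]

theorem star_mul_mul_star_mul_eq_zero [SemigroupWithZero A] [Star A] {S : E → A}
    (hS : Pairwise fun i j => star (S i) * S j = 0) {i j k l : E} (h : (k, l) ≠ (i, j)) :
    star (S k) * (S i * star (S j)) * S l = 0 := by
  have hassoc : star (S k) * (S i * star (S j)) * S l = star (S k) * S i * (star (S j) * S l) := by
    simp only [mul_assoc]
  rw [hassoc]
  by_cases hki : k = i
  · have hjl : j ≠ l := fun hjl => h (Prod.ext hki hjl.symm)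
    rw [hS hjl, mul_zero]
  · rw [hS hki, zero_mul]

theorem linearIndependent_sumElim_mul_star_idempotent {V R : Type*} [Ring R] [IsDomain R]
    [NonUnitalRing A] [StarMul A] [Module R A] [SMulCommClass R A A] [IsScalarTower R A A]
    [Module.IsTorsionFree R A] {S : E → A} {q : V → A}
    (hS : ∀ i, S i * star (S i) * S i = S i) (hS_orth : Pairwise fun i j => star (S i) * S j = 0)
    (hq : ∀ v, IsIdempotentElem (q v)) (hq_orth : Pairwise fun v w => q v * q w = 0)
    (hq_ne : ∀ v, q v ≠ 0) (hqS : ∀ v i, q v * S i = 0) :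
    LinearIndependent R
      (Sum.elim (fun ij : {ij : E × E // S ij.1 * star (S ij.2) ≠ 0} => S ij.1.1 * star (S ij.1.2))
        q) := by
  refine linearIndependent_of_pairwise_linearMap_apply_eq_zero
    (Sum.elim (fun ij => LinearMap.mulLeftRight R (star (S ij.1.1), S ij.1.2))
      (fun v => LinearMap.mulLeftRight R (q v, q v))) ?_ ?_
  · rintro (⟨⟨k, l⟩, hkl⟩ | v) (⟨⟨i, j⟩, hij⟩ | w) hne <;>
      simp only [Sum.elim_inl, Sum.elim_inr, LinearMap.mulLeftRight_apply]
    · exact star_mul_mul_star_mul_eq_zero hS_orth fun h => hne (congrArg Sum.inl (Subtype.ext h))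
    · rw [mul_assoc, hqS, mul_zero]
    · rw [← mul_assoc, hqS, zero_mul, zero_mul]
    · rw [hq_orth fun h => hne (congrArg Sum.inr h), zero_mul]
  · rintro (⟨⟨i, j⟩, hij⟩ | v) <;>
      simp only [Sum.elim_inl, Sum.elim_inr, LinearMap.mulLeftRight_apply]
    · exact star_mul_mul_star_mul_ne_zero (hS i) (hS j) hij
    · rw [hq v, hq v]
      exact hq_ne v

end PartialIsometry

theorem graph_algebra_basis_linearIndependent_general {E V R A : Type*} [DecidableEq V] [Ring R]
    [IsDomain R] [NonUnitalRing A] [StarMul A] [Module R A] [SMulCommClass R A A]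
    [IsScalarTower R A A] [Module.IsTorsionFree R A] {s t : E → V} {S : E → A} {p : V → A}
    (hp_orth : ∀ v w, p v * p w = if v = w then p v else 0)
    (hSS : ∀ i, star (S i) * S i = p (t i))
    (hSorth : ∀ i j, i ≠ j → star (S i) * S j = 0)
    (hSt : ∀ i, S i * p (t i) = S i)
    (hsS : ∀ i, p (s i) * S i = S i)
    (hpne : ∀ v, (∀ i, s i ≠ v) → p v ≠ 0) :
    LinearIndependent R
      (Sum.elim (fun ij : {ij : E × E // S ij.1 * star (S ij.2) ≠ 0} => S ij.1.1 * star (S ij.1.2))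
        (fun v : {v : V // ∀ i, s i ≠ v} => p v.1)) := by
  have hS_partialIsometry (i : E) : S i * star (S i) * S i = S i := by
    rw [mul_assoc, hSS, hSt]
  have hp_idem (v : V) : IsIdempotentElem (p v) := (hp_orth v v).trans (if_pos rfl)
  have hp_mul_eq_zero {v w : V} (hvw : v ≠ w) : p v * p w = 0 := (hp_orth v w).trans (if_neg hvw)
  have hp_sink_mul (v : {v : V // ∀ i, s i ≠ v}) (i : E) : p v * S i = 0 := by
    rw [← hsS i, ← mul_assoc, hp_mul_eq_zero (v.2 i).symm, zero_mul]
  exact linearIndependent_sumElim_mul_star_idempotent hS_partialIsometry (fun i j => hSorth i j)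
    (fun v => hp_idem v) (fun _ _ hvw => hp_mul_eq_zero (Subtype.coe_ne_coe.mpr hvw))
    (fun v => hpne v v.2) hp_sink_mul

/-- For a finite connected directed graph `Γ` (source map `s`, target map `t`)
and elements `S i`, `p v` of a unital complex star algebra `A` satisfying the graph
C*-algebra relations, the family of elements `S i * (S j)^*` for `(i,j) ∈ Λ`
(the pairs with `S i * (S j)^* ≠ 0`) together with the `p v` for `v ∈ I`
(the vertices that are not a source of any edge) is linearly independent over `ℂ`. -/
theorem graph_algebra_basis_linearIndependent
    (n m : ℕ) (s t : Fin n → Fin m)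
    (A : Type*) [Ring A] [Algebra ℂ A] [StarRing A] [StarModule ℂ A]
    (S : Fin n → A) (p : Fin m → A)
    (hp_sa : ∀ v, star (p v) = p v)
    (hp_orth : ∀ v w, p v * p w = if v = w then p v else 0)
    (hSS : ∀ i, star (S i) * S i = p (t i))
    (hCK : ∀ v : Fin m, (∃ j, s j = v) →
      ∑ j ∈ Finset.univ.filter (fun j => s j = v), S j * star (S j) = p v)
    (hSorth : ∀ i j, i ≠ j → star (S i) * S j = 0)
    (hSt : ∀ i, S i * p (t i) = S i)
    (hsS : ∀ i, p (s i) * S i = S i)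
    (hconn : ∀ v : Fin m, (∃ i, s i = v) ∨ (∃ i, t i = v))
    (hpne : ∀ v, p v ≠ 0) :
    LinearIndependent ℂ
      (fun x : {ij : Fin n × Fin n // S ij.1 * star (S ij.2) ≠ 0} ⊕
               {v : Fin m // ∀ i, s i ≠ v} =>
        Sum.elim (fun ij => S ij.1.1 * star (S ij.1.2)) (fun v => p v.1) x) := by
  exact graph_algebra_basis_linearIndependent_general hp_orth hSS hSorth hSt hsS fun v _ => hpne v
end

section
/- For every edge e_i, the identity Σ_{k=1}^{n} u_{s(e_i)s(e_k)} u_{t(e_i)t(e_k)} u_{t(e_i)t(e_k)} u_{s(e_i)s(e_k)} = 1 holds, where the sum runs over all edges e_k of Γ. -/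
section

variable {R : Type*} [Semiring R]

lemma sum_mul_mul_mul_eq_self {κ : Type*} [Fintype κ] {a : R} {q : κ → R}
    (ha : IsIdempotentElem a) (hq : ∀ j, IsIdempotentElem (q j)) (hq_sum : ∑ j, q j = 1) :
    ∑ j, a * q j * q j * a = a :=
  calc
    ∑ j, a * q j * q j * a = ∑ j, a * q j * a := by
      simp only [mul_assoc a, (hq _).eq]
    _ = a * (∑ j, q j) * a := by rw [Finset.mul_sum, Finset.sum_mul]
    _ = a := by rw [hq_sum, mul_one, ha.eq]

lemma sum_prod_mul_mul_mul_eq_one {ι κ : Type*} [Fintype ι] [Fintype κ] {p : ι → R} {q : κ → R}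
    (hp : ∀ i, IsIdempotentElem (p i)) (hp_sum : ∑ i, p i = 1)
    (hq : ∀ j, IsIdempotentElem (q j)) (hq_sum : ∑ j, q j = 1) :
    ∑ x : ι × κ, p x.1 * q x.2 * q x.2 * p x.1 = 1 := by
  simp only [Fintype.sum_prod_type, sum_mul_mul_mul_eq_self (hp _) hq hq_sum, hp_sum]

theorem banica_sum_eq_one_general {E V : Type*} [Fintype E] [Fintype V] {s t : E → V}
    (hnomult : Function.Injective fun e => (s e, t e)) {u : V → V → R}
    (h_idem : ∀ i j, IsIdempotentElem (u i j)) (h_rowsum : ∀ i, ∑ j, u i j = 1)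
    (h_edge : ∀ e i k, (∀ f, ¬(s f = i ∧ t f = k)) → u (s e) i * u (t e) k = 0) (e : E) :
    ∑ f, u (s e) (s f) * u (t e) (t f) * u (t e) (t f) * u (s e) (s f) = 1 := by
  let term (x : V × V) : R := u (s e) x.1 * u (t e) x.2 * u (t e) x.2 * u (s e) x.1
  have term_eq_zero_of_not_edge : ∀ x ∉ Set.range fun f => (s f, t f), term x = 0 := by
    intro x hx
    have hx_mul : u (s e) x.1 * u (t e) x.2 = 0 :=
      h_edge e x.1 x.2 fun f hf => hx ⟨f, Prod.ext hf.1 hf.2⟩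
    simp only [term, hx_mul, zero_mul]
  calc
    ∑ f, term (s f, t f) = ∑ x, term x :=
      Fintype.sum_of_injective _ hnomult _ _ term_eq_zero_of_not_edge fun _ => rfl
    _ = 1 := sum_prod_mul_mul_mul_eq_one (h_idem _) (h_rowsum _) (h_idem _) (h_rowsum _)

end

/-- Let `Γ` be a finite directed graph without multiple edges or loops and let
`u i j` be elements of a unital complex star algebra `Q` satisfying the relations of Banica's
quantum automorphism group of `Γ`.  Then for every edge `e_i`,
`Σ_k u_{s(e_i)s(e_k)} u_{t(e_i)t(e_k)} u_{t(e_i)t(e_k)} u_{s(e_i)s(e_k)} = 1`. -/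
theorem banica_sum_eq_one
    (n m : ℕ) (s t : Fin n → Fin m)
    (hnomult : Function.Injective (fun e => (s e, t e)))
    (hnoloop : ∀ e, s e ≠ t e)
    (Q : Type*) [Ring Q] [Algebra ℂ Q] [StarRing Q] [StarModule ℂ Q]
    (u : Fin m → Fin m → Q)
    (h_sa : ∀ i j, star (u i j) = u i j)
    (h_row : ∀ i j k, u i j * u i k = if j = k then u i j else 0)
    (h_col : ∀ i j k, u j i * u k i = if j = k then u j i else 0)
    (h_rowsum : ∀ i, ∑ l, u i l = 1)
    (h_colsum : ∀ i, ∑ l, u l i = 1)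
    (h_edge : ∀ (j : Fin n) (i k : Fin m), (∀ e, ¬(s e = i ∧ t e = k)) →
      u (s j) i * u (t j) k = 0 ∧ u (t j) k * u (s j) i = 0 ∧
      u i (s j) * u k (t j) = 0 ∧ u k (t j) * u i (s j) = 0) :
    ∀ i : Fin n,
      ∑ k, u (s i) (s k) * u (t i) (t k) * u (t i) (t k) * u (s i) (s k) = 1 :=
  banica_sum_eq_one_general hnomult (fun i j => (h_row i j j).trans (if_pos rfl)) h_rowsum
    fun e i k h => (h_edge e i k h).1
end

section
/- For every pair of distinct edges e_i ≠ e_j with t(e_i) = t(e_j), the identity Σ_{k=1}^{n} u_{s(e_i)s(e_k)} u_{t(e_i)t(e_k)} u_{t(e_j)t(e_k)} u_{s(e_j)s(e_k)} = 0 holds, where the sum runs over all edges e_k of Γ. -/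
/-!
Since `t(e_i) = t(e_j)`, the two middle factors merge into a single projection. The edge relations
then allow the sum over edges to be extended to all pairs of vertices `(p, q)`, where summing over
`q` removes the middle factor and leaves `Σ_p u_{s(e_i)p} u_{s(e_j)p}`. Without multiple edges
`s(e_i) ≠ s(e_j)`, so every summand vanishes by orthogonality within a column.
-/

lemma sum_mul_mul_eq_sum_mul_of_sum_eq_one {E V W Q : Type*} [Fintype E] [Fintype V] [Fintype W]
    [NonAssocSemiring Q] {s : E → V} {t : E → W}
    (h_inj : Function.Injective fun e => (s e, t e)) {a c : V → Q} {b : W → Q}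
    (h_zero : ∀ p q, (∀ e, ¬(s e = p ∧ t e = q)) → a p * b q = 0) (h_sum : ∑ q, b q = 1) :
    ∑ e, a (s e) * b (t e) * c (s e) = ∑ p, a p * c p := by
  have extend_to_pairs : ∑ e, a (s e) * b (t e) * c (s e) =
      ∑ x : V × W, a x.1 * b x.2 * c x.1 := by
    refine Fintype.sum_of_injective _ h_inj _ _ ?_ fun _ => rfl
    rintro ⟨p, q⟩ h_not_edge
    have h_pq : a p * b q = 0 :=
      h_zero p q fun e he => h_not_edge ⟨e, Prod.ext he.1 he.2⟩
    simp only [h_pq, zero_mul]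
  calc ∑ e, a (s e) * b (t e) * c (s e)
      = ∑ p, ∑ q, a p * b q * c p := by rw [extend_to_pairs, Fintype.sum_prod_type]
    _ = ∑ p, a p * (∑ q, b q) * c p := by simp only [Finset.mul_sum, Finset.sum_mul]
    _ = ∑ p, a p * c p := by simp only [h_sum, mul_one]

theorem banica_sum_eq_zero_general {E V Q : Type*} [Fintype E] [Fintype V] [Semiring Q]
    {s t : E → V} (h_inj : Function.Injective fun e => (s e, t e)) {u : V → V → Q}
    (h_idem : ∀ v w, IsIdempotentElem (u v w))
    (h_col : ∀ v v' w, v ≠ v' → u v w * u v' w = 0)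
    (h_rowsum : ∀ v, ∑ w, u v w = 1)
    (h_edge : ∀ e p q, (∀ e', ¬(s e' = p ∧ t e' = q)) → u (s e) p * u (t e) q = 0)
    {i j : E} (hij : i ≠ j) (ht : t i = t j) :
    ∑ k, u (s i) (s k) * u (t i) (t k) * u (t j) (t k) * u (s j) (s k) = 0 := by
  have hs : s i ≠ s j := fun h => hij (h_inj (Prod.ext h ht))
  calc ∑ k, u (s i) (s k) * u (t i) (t k) * u (t j) (t k) * u (s j) (s k)
      = ∑ k, u (s i) (s k) * u (t i) (t k) * u (s j) (s k) := by
        simp only [← ht, mul_assoc (u (s i) _), (h_idem _ _).eq]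
    _ = ∑ p, u (s i) p * u (s j) p :=
        sum_mul_mul_eq_sum_mul_of_sum_eq_one h_inj (h_edge i) (h_rowsum (t i))
    _ = 0 := Finset.sum_eq_zero fun p _ => h_col _ _ p hs

/-- Let `Γ` be a finite directed graph without multiple edges or loops and let
`u i j` be elements of a unital complex star algebra `Q` satisfying the relations of Banica's
quantum automorphism group of `Γ`.  Then for every pair of distinct edges `e_i ≠ e_j` with
`t(e_i) = t(e_j)`, `Σ_k u_{s(e_i)s(e_k)} u_{t(e_i)t(e_k)} u_{t(e_j)t(e_k)} u_{s(e_j)s(e_k)} = 0`. -/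
theorem banica_sum_eq_zero
    (n m : ℕ) (s t : Fin n → Fin m)
    (hnomult : Function.Injective (fun e => (s e, t e)))
    (hnoloop : ∀ e, s e ≠ t e)
    (Q : Type*) [Ring Q] [Algebra ℂ Q] [StarRing Q] [StarModule ℂ Q]
    (u : Fin m → Fin m → Q)
    (h_sa : ∀ i j, star (u i j) = u i j)
    (h_row : ∀ i j k, u i j * u i k = if j = k then u i j else 0)
    (h_col : ∀ i j k, u j i * u k i = if j = k then u j i else 0)
    (h_rowsum : ∀ i, ∑ l, u i l = 1)
    (h_colsum : ∀ i, ∑ l, u l i = 1)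
    (h_edge : ∀ (j : Fin n) (i k : Fin m), (∀ e, ¬(s e = i ∧ t e = k)) →
      u (s j) i * u (t j) k = 0 ∧ u (t j) k * u (s j) i = 0 ∧
      u i (s j) * u k (t j) = 0 ∧ u k (t j) * u i (s j) = 0) :
    ∀ i j : Fin n, i ≠ j → t i = t j →
      ∑ k, u (s i) (s k) * u (t i) (t k) * u (t j) (t k) * u (s j) (s k) = 0 := by
  intro i j hij ht
  exact banica_sum_eq_zero_general hnomult (fun v w => (h_row v w w).trans (if_pos rfl))
    (fun v v' w hv => (h_col w v v').trans (if_neg hv)) h_rowsum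
    (fun e p q h => (h_edge e p q h).1) hij ht
end

section
/- Let e_k be an edge whose target t(e_k) is not the source of any edge. For each edge e_l set f_l = 1 if t(e_l) is not the source of any edge, and f_l = #{e : s(e) = t(e_l)} otherwise. Then Σ_{l=1}^{n} f_l · u_{t(e_k)t(e_l)} u_{s(e_k)s(e_l)} u_{t(e_k)t(e_l)} = 1, where the sum runs over all edges e_l of Γ; in particular all terms with t(e_l) the source of some edge vanish. -/
/-!
The products `u_{t(e_k) j} u_{s(e_k) i}` vanish unless `(i, j)` is an edge, so the sum over edges
may be extended to all pairs `(i, j)` of vertices. Summing first over `i` collapses the middle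
factor to `1`, and the remaining idempotents `u_{t(e_k) j}` sum to `1` over `j`. The weights `f_l`
other than `1` multiply zero terms: if `t(e_l) = s(e)` for some edge `e`, then `u_{t(e_k) t(e_l)}`
is annihilated by every `u_{j t(e)}`, since no edge starts at `t(e_k)`, and these sum to `1`.
-/

section

variable {E V W Q : Type*} [Fintype V] [NonAssocSemiring Q]

theorem sum_prod_mul_mul_self_eq_one [Fintype W] {p : V → Q} {q : W → Q}
    (hp_idem : ∀ j, IsIdempotentElem (p j)) (hp_sum : ∑ j, p j = 1) (hq_sum : ∑ i, q i = 1) :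
    ∑ x : W × V, p x.2 * q x.1 * p x.2 = 1 :=
  calc ∑ x : W × V, p x.2 * q x.1 * p x.2
      = ∑ j, p j * (∑ i, q i) * p j := by
        simp only [Fintype.sum_prod_type_right, Finset.mul_sum, Finset.sum_mul]
    _ = ∑ j, p j := by simp only [hq_sum, mul_one, (hp_idem _).eq]
    _ = 1 := hp_sum

theorem sum_edges_mul_mul_self_eq_one [Fintype E] [Fintype W] {s : E → W} {t : E → V}
    (hst : Function.Injective fun e => (s e, t e)) {p : V → Q} {q : W → Q}
    (hp_idem : ∀ j, IsIdempotentElem (p j)) (hp_sum : ∑ j, p j = 1) (hq_sum : ∑ i, q i = 1)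
    (hpq : ∀ i j, (∀ e, ¬(s e = i ∧ t e = j)) → p j * q i = 0) :
    ∑ e, p (t e) * q (s e) * p (t e) = 1 := by
  have vanish_off_edges : ∀ x ∉ Set.range (fun e => (s e, t e)), p x.2 * q x.1 * p x.2 = 0 := by
    intro x hx
    rw [hpq x.1 x.2 fun e he => hx ⟨e, Prod.ext he.1 he.2⟩, zero_mul]
  rw [← sum_prod_mul_mul_self_eq_one hp_idem hp_sum hq_sum]
  exact Fintype.sum_of_injective _ hst _ _ vanish_off_edges fun _ => rfl

theorem apply_sink_source_eq_zero {s t : E → V} {u : V → V → Q} {e : E}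
    (h_colsum : ∑ i, u i (t e) = 1)
    (h_edge : ∀ i j, (∀ e', ¬(s e' = i ∧ t e' = j)) → u i (s e) * u j (t e) = 0)
    {v : V} (hv : ∀ e', s e' ≠ v) : u v (s e) = 0 :=
  calc u v (s e) = ∑ j, u v (s e) * u j (t e) := by rw [← Finset.mul_sum, h_colsum, mul_one]
    _ = 0 := Finset.sum_eq_zero fun j _ => h_edge v j fun e' he' => hv e' he'.1

theorem banica_sink_sum_eq_one_general [Fintype E] {s t : E → V}
    (hnomult : Function.Injective fun e => (s e, t e)) {u : V → V → Q}
    (h_idem : ∀ i j, IsIdempotentElem (u i j))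
    (h_rowsum : ∀ i, ∑ l, u i l = 1) (h_colsum : ∀ i, ∑ l, u l i = 1)
    (h_edge : ∀ (e : E) (i j : V), (∀ e', ¬(s e' = i ∧ t e' = j)) →
      u (t e) j * u (s e) i = 0 ∧ u i (s e) * u j (t e) = 0)
    {k : E} (hk : ∀ e, s e ≠ t k) {f : E → ℕ}
    (hf_sink : ∀ l, (∀ e, s e ≠ t l) → f l = 1) :
    (∑ l, f l • (u (t k) (t l) * u (s k) (s l) * u (t k) (t l)) = 1) ∧
    (∀ l, (∃ e, s e = t l) → u (t k) (t l) * u (s k) (s l) * u (t k) (t l) = 0) := by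
  have vanish_of_source : ∀ l, (∃ e, s e = t l) →
      u (t k) (t l) * u (s k) (s l) * u (t k) (t l) = 0 := by
    rintro l ⟨e, he⟩
    have entry_eq_zero : u (t k) (s e) = 0 :=
      apply_sink_source_eq_zero (h_colsum (t e)) (fun i j hij => (h_edge e i j hij).2) hk
    rw [← he, entry_eq_zero, mul_zero]
  have weight_irrelevant : ∀ l, f l • (u (t k) (t l) * u (s k) (s l) * u (t k) (t l)) =
      u (t k) (t l) * u (s k) (s l) * u (t k) (t l) := by
    intro l
    by_cases hl : ∃ e, s e = t l
    · rw [vanish_of_source l hl, smul_zero]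
    · rw [hf_sink l (not_exists.mp hl), one_smul]
  refine ⟨?_, vanish_of_source⟩
  simp only [weight_irrelevant]
  exact sum_edges_mul_mul_self_eq_one hnomult (h_idem (t k)) (h_rowsum (t k)) (h_rowsum (s k))
    fun i j hij => (h_edge k i j hij).1

end

open scoped Classical in
/-- Let `Γ` be a finite directed graph without multiple edges or loops and let
`u i j` be elements of a unital complex star algebra `Q` satisfying the relations of Banica's
quantum automorphism group of `Γ`, together with the conclusion of Lemma 3.7 of
Schmidt–Weber.  Let `e_k` be an edge whose target is not the source of any edge, and for
each edge `e_l` set `f l = 1` if `t(e_l)` is not a source, and `f l = #{e : s e = t(e_l)}`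
otherwise.  Then `Σ_l f l • (u_{t(e_k)t(e_l)} u_{s(e_k)s(e_l)} u_{t(e_k)t(e_l)}) = 1`, and
every term with `t(e_l)` the source of some edge vanishes. -/
theorem banica_sink_sum_eq_one
    (n m : ℕ) (s t : Fin n → Fin m)
    (hnomult : Function.Injective (fun e => (s e, t e)))
    (hnoloop : ∀ e, s e ≠ t e)
    (Q : Type*) [Ring Q] [Algebra ℂ Q] [StarRing Q] [StarModule ℂ Q]
    (u : Fin m → Fin m → Q)
    (h_sa : ∀ i j, star (u i j) = u i j)
    (h_row : ∀ i j k, u i j * u i k = if j = k then u i j else 0)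
    (h_col : ∀ i j k, u j i * u k i = if j = k then u j i else 0)
    (h_rowsum : ∀ i, ∑ l, u i l = 1)
    (h_colsum : ∀ i, ∑ l, u l i = 1)
    (h_edge : ∀ (j : Fin n) (i k : Fin m), (∀ e, ¬(s e = i ∧ t e = k)) →
      u (s j) i * u (t j) k = 0 ∧ u (t j) k * u (s j) i = 0 ∧
      u i (s j) * u k (t j) = 0 ∧ u k (t j) * u i (s j) = 0)
    (h_weber : ∀ (j : Fin n) (v : Fin m), (∀ e, s e ≠ v) →
      u v (s j) = 0 ∧ u (s j) v = 0)
    (k : Fin n) (hk : ∀ e, s e ≠ t k)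
    (f : Fin n → ℕ)
    (hf : ∀ l, f l = if ∀ e, s e ≠ t l then 1
      else (Finset.univ.filter (fun e => s e = t l)).card) :
    (∑ l, f l • (u (t k) (t l) * u (s k) (s l) * u (t k) (t l)) = 1) ∧
    (∀ l : Fin n, (∃ e, s e = t l) →
      u (t k) (t l) * u (s k) (s l) * u (t k) (t l) = 0) :=
  banica_sink_sum_eq_one_general hnomult (fun i j => (h_row i j j).trans (if_pos rfl)) h_rowsum
    h_colsum (fun e i j hij => ⟨(h_edge e i j hij).2.1, (h_edge e i j hij).2.2.1⟩) hk
    fun l hl => (hf l).trans (if_pos hl)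
end

section
/- Every q_k (1 ≤ k ≤ n) is unitary: q_k^* q_k = q_k q_k^* = 1. -/
/-!
The elements `S i * star (S i)` and `star (S n) * S n` are the vertex projections of the line graph.
Multiplying the tensor identity on the right by a nonzero `b` in the range of one of them, namely
`b = S k` or `b = star (S n)`, kills all the other summands and leaves `b ⊗ x = b ⊗ 1`, so the
coefficient `x` is `1`. Hence `q k * star (q k) = 1` for all `k` and `star (q n) * q n = 1`, and
`star (q k) * q k = q (k + 1) * star (q (k + 1))` handles the remaining products.
-/

open scoped TensorProduct

section TensorCoefficients

variable {R A M : Type*} [CommSemiring R] [AddCommMonoid M] [Module R M]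

theorem tmul_right_injective_of_ne_zero [IsDomain R] [AddCommMonoid A] [Module R A]
    [Module.Projective R A] [Module.IsTorsionFree R M] {a : A} (ha : a ≠ 0) :
    Function.Injective fun x : M ↦ a ⊗ₜ[R] x := by
  intro x y hxy
  obtain ⟨f, hf⟩ := Module.Projective.exists_dual_ne_zero R ha
  have hfxy : f a • x = f a • y := by
    simpa using congrArg (TensorProduct.lid R M ∘ LinearMap.rTensor M f) hxy
  exact smul_right_injective M hf hfxy

variable [Semiring A] [Algebra R A] {ι : Type*} {s : Finset ι} {e : ι → A} {x : ι → M} {y : M}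

theorem sum_mul_tmul_eq_tmul (h : ∑ i ∈ s, e i ⊗ₜ[R] x i = 1 ⊗ₜ[R] y) (b : A) :
    ∑ i ∈ s, (e i * b) ⊗ₜ[R] x i = b ⊗ₜ[R] y := by
  simpa using congrArg (LinearMap.rTensor M (LinearMap.mulRight R b)) h

theorem coefficient_eq_of_sum_tmul_eq_one_tmul [IsDomain R] [Module.Projective R A]
    [Module.IsTorsionFree R M] (h : ∑ i ∈ s, e i ⊗ₜ[R] x i = 1 ⊗ₜ[R] y) {k : ι} (hk : k ∈ s)
    {b : A} (hb : b ≠ 0) (hkb : e k * b = b) (hib : ∀ i ∈ s, i ≠ k → e i * b = 0) :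
    x k = y := by
  apply tmul_right_injective_of_ne_zero (R := R) hb
  calc b ⊗ₜ[R] x k = ∑ i ∈ s, (e i * b) ⊗ₜ[R] x i := by
        rw [Finset.sum_eq_single_of_mem k hk fun i hi hik ↦ by
          rw [hib i hi hik, TensorProduct.zero_tmul], hkb]
    _ = b ⊗ₜ[R] y := sum_mul_tmul_eq_tmul h b

end TensorCoefficients

section VertexCoefficients

variable {R A M ι : Type*} [CommSemiring R] [IsDomain R] [Semiring A] [StarRing A] [Algebra R A]
  [Module.Projective R A] [AddCommMonoid M] [Module R M] [Module.IsTorsionFree R M]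
  {s : Finset ι} {S : ι → A} {x : ι → M} {y z : M}

theorem range_projection_coefficient_eq {t : A}
    (h : ∑ i ∈ s, (S i * star (S i)) ⊗ₜ[R] x i + t ⊗ₜ[R] z = 1 ⊗ₜ[R] y)
    {k : ι} (hk : k ∈ s) (hSk : S k ≠ 0) (hpartial : S k * star (S k) * S k = S k)
    (horth : ∀ i ∈ s, i ≠ k → star (S i) * S k = 0) (ht : t * S k = 0) :
    x k = y := by
  have hsum : ∑ o ∈ s.insertNone, (o.elim t fun i ↦ S i * star (S i)) ⊗ₜ[R] o.elim z x
      = 1 ⊗ₜ[R] y := by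
    simpa [add_comm] using h
  refine coefficient_eq_of_sum_tmul_eq_one_tmul hsum (Finset.some_mem_insertNone.2 hk) hSk
    hpartial ?_
  rintro (_ | i) hi hik
  · exact ht
  · have hzero := horth i (Finset.some_mem_insertNone.1 hi) (ne_of_apply_ne some hik)
    simp [mul_assoc, hzero]

theorem source_projection_coefficient_eq {T : A}
    (h : ∑ i ∈ s, (S i * star (S i)) ⊗ₜ[R] x i + (star T * T) ⊗ₜ[R] z = 1 ⊗ₜ[R] y)
    (hT : T ≠ 0) (hpartial : T * star T * T = T) (hsink : ∀ i ∈ s, T * S i = 0) :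
    z = y := by
  have hsum : ∑ o ∈ s.insertNone, (o.elim (star T * T) fun i ↦ S i * star (S i)) ⊗ₜ[R] o.elim z x
      = 1 ⊗ₜ[R] y := by
    simpa [add_comm] using h
  have hpartial_star : star T * T * star T = star T := by
    simpa [mul_assoc] using congrArg star hpartial
  refine coefficient_eq_of_sum_tmul_eq_one_tmul hsum Finset.none_mem_insertNone
    (star_ne_zero.2 hT) hpartial_star ?_
  rintro (_ | i) hi hik
  · exact absurd rfl hik
  · have hzero := hsink i (Finset.some_mem_insertNone.1 hi)
    simp [mul_assoc, ← star_mul, hzero]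

end VertexCoefficients

theorem line_graph_coefficients_unitary_general {R A Q : Type*} [CommSemiring R] [IsDomain R]
    [Semiring A] [StarRing A] [Algebra R A] [Module.Projective R A]
    [Semiring Q] [StarMul Q] [Algebra R Q] [Module.IsTorsionFree R Q]
    {n : ℕ} {S : ℕ → A} {q : ℕ → Q}
    (hS_ne : ∀ i, 1 ≤ i → i ≤ n → S i ≠ 0)
    (hS_orth : ∀ i j, 1 ≤ i → i ≤ n → 1 ≤ j → j ≤ n → i ≠ j → star (S i) * S j = 0)
    (hS_partial : ∀ k, 1 ≤ k → k ≤ n → S k * star (S k) * S k = S k)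
    (hS_sink : ∀ k, 1 ≤ k → k ≤ n → S n * S k = 0)
    (hq : ∀ i, 1 ≤ i → i ≤ n - 1 → q (i + 1) * star (q (i + 1)) = star (q i) * q i)
    (hten : ∑ i ∈ Finset.Icc 1 n, (S i * star (S i)) ⊗ₜ[R] (q i * star (q i))
        + (star (S n) * S n) ⊗ₜ[R] (star (q n) * q n) = (1 : A) ⊗ₜ[R] (1 : Q))
    {k : ℕ} (hk1 : 1 ≤ k) (hkn : k ≤ n) :
    q k ∈ unitary Q := by
  have hrange : ∀ j, 1 ≤ j → j ≤ n → q j * star (q j) = 1 := fun j hj1 hjn ↦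
    range_projection_coefficient_eq hten (Finset.mem_Icc.2 ⟨hj1, hjn⟩) (hS_ne j hj1 hjn)
      (hS_partial j hj1 hjn)
      (fun i hi hij ↦
        hS_orth i j (Finset.mem_Icc.1 hi).1 (Finset.mem_Icc.1 hi).2 hj1 hjn hij)
      (by rw [mul_assoc, hS_sink j hj1 hjn, mul_zero])
  refine Unitary.mem_iff.2 ⟨?_, hrange k hk1 hkn⟩
  rcases hkn.eq_or_lt with rfl | hlt
  · exact source_projection_coefficient_eq hten (hS_ne k hk1 le_rfl) (hS_partial k hk1 le_rfl)
      fun i hi ↦ hS_sink i (Finset.mem_Icc.1 hi).1 (Finset.mem_Icc.1 hi).2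
  · rw [← hq k hk1 (Nat.le_sub_one_of_lt hlt)]
    exact hrange (k + 1) (Nat.le_add_left 1 k) hlt

open scoped TensorProduct in
/-- Let `A` be a unital complex star algebra containing nonzero elements
`S 1, …, S n` and self-adjoint idempotents `p 0, …, p n` satisfying the relations of the
graph C*-algebra of the line graph with `n` consecutive edges, and let `Q` be a unital
C*-algebra with elements `q 1, …, q n` satisfying `q (i+1) q (i+1)^* = q i^* q i` and
`Σ_i S_i S_i^* ⊗ q_i q_i^* + S_n^* S_n ⊗ q_n^* q_n = 1 ⊗ 1` in `A ⊗[ℂ] Q`.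
Then every `q k` is unitary. -/
theorem line_graph_coefficients_unitary
    (n : ℕ) (hn : 1 ≤ n)
    (A : Type*) [Ring A] [Algebra ℂ A] [StarRing A] [StarModule ℂ A]
    (S : ℕ → A) (p : ℕ → A)
    (hS_ne : ∀ i, 1 ≤ i → i ≤ n → S i ≠ 0)
    (hp_sa : ∀ i, i ≤ n → star (p i) = p i)
    (hp_idem : ∀ i, i ≤ n → p i * p i = p i)
    (h1 : S 1 * star (S 1) = p 0)
    (h2 : star (S n) * S n = p n)
    (h3 : ∑ i ∈ Finset.range (n + 1), p i = 1)
    (h4 : ∀ i, 1 ≤ i → i ≤ n - 1 →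
      star (S i) * S i = p i ∧ S (i + 1) * star (S (i + 1)) = p i)
    (h5 : ∀ i j, 1 ≤ i → i ≤ n → 1 ≤ j → j ≤ n → i ≠ j →
      star (S i) * S j = 0 ∧ S i * star (S j) = 0)
    (h6 : ∀ k, 1 ≤ k → k ≤ n → S k * star (S k) * S k = S k)
    (h7 : ∀ k, 1 ≤ k → k ≤ n → S n * S k = 0)
    (Q : Type*) [NormedRing Q] [StarRing Q] [CStarRing Q] [NormOneClass Q]
    [NormedAlgebra ℂ Q] [StarModule ℂ Q] [CompleteSpace Q]
    (q : ℕ → Q)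
    (hq : ∀ i, 1 ≤ i → i ≤ n - 1 → q (i + 1) * star (q (i + 1)) = star (q i) * q i)
    (hten : ∑ i ∈ Finset.Icc 1 n, (S i * star (S i)) ⊗ₜ[ℂ] (q i * star (q i))
        + (star (S n) * S n) ⊗ₜ[ℂ] (star (q n) * q n)
      = (1 : A) ⊗ₜ[ℂ] (1 : Q)) :
    ∀ k, 1 ≤ k → k ≤ n → star (q k) * q k = 1 ∧ q k * star (q k) = 1 := by
  exact fun k hk1 hkn ↦ line_graph_coefficients_unitary_general hS_ne
    (fun i j hi1 hin hj1 hjn hij ↦ (h5 i j hi1 hin hj1 hjn hij).1) h6 h7 hq hten hk1 hkn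
end

section
/- The products q_{11} q_{21}, q_{21} q_{11}, q_{22} q_{12} and q_{12} q_{22} all vanish. -/
/-- A proper involution: `star a * a` vanishes only for `a = 0`. This is the algebraic shadow of the
C⋆-identity, and is phrased so as to make sense without a norm or an addition. -/
def IsProperInvolution (R : Type*) [Mul R] [Zero R] [Star R] : Prop :=
  ∀ ⦃a : R⦄, star a * a = 0 → a = 0

theorem isProperInvolution_of_cStarRing (E : Type*) [NonUnitalNormedRing E] [StarRing E]
    [CStarRing E] : IsProperInvolution E :=
  fun a => (CStarRing.star_mul_self_eq_zero_iff a).mp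

namespace IsProperInvolution

variable {R : Type*} [SemigroupWithZero R] [StarMul R] {x y z : R}

theorem star_mul_self_mul_eq_zero_iff (hR : IsProperInvolution R) :
    star x * x * y = 0 ↔ x * y = 0 := by
  refine ⟨fun h => hR ?_, fun h => by rw [mul_assoc, h, mul_zero]⟩
  calc star (x * y) * (x * y) = star y * (star x * x * y) := by simp only [star_mul, mul_assoc]
    _ = 0 := by rw [h, mul_zero]

theorem mul_eq_zero_iff_of_star_mul_self_eq (hR : IsProperInvolution R)
    (h : star x * x = z * star z) : x * y = 0 ↔ star z * y = 0 := by
  rw [← hR.star_mul_self_mul_eq_zero_iff, h, ← hR.star_mul_self_mul_eq_zero_iff (x := star z),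
    star_star]

theorem star_mul_eq_zero_symm (hR : IsProperInvolution R) (h : star x * y = 0) :
    star y * x = 0 := by
  refine hR ?_
  calc star (star y * x) * (star y * x) = star x * y * (star y * x) := by
        rw [star_mul, star_star]
    _ = 0 := by rw [h, zero_mul]

end IsProperInvolution

theorem complete_graph_coefficients_products_vanish_general
    {R : Type*} [SemigroupWithZero R] [StarMul R] (hR : IsProperInvolution R)
    {q11 q12 q21 q22 : R}
    (h1 : star q11 * q12 = 0)
    (h2 : star q21 * q22 = 0)
    (h3 : star q11 * q11 = q22 * star q22)
    (h4 : q11 * star q11 = star q22 * q22)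
    (h5 : star q21 * q21 = q12 * star q12)
    (h6 : q21 * star q21 = star q12 * q12) :
    q11 * q21 = 0 ∧ q21 * q11 = 0 ∧ q22 * q12 = 0 ∧ q12 * q22 = 0 :=
  ⟨(hR.mul_eq_zero_iff_of_star_mul_self_eq h3).mpr (hR.star_mul_eq_zero_symm h2),
    (hR.mul_eq_zero_iff_of_star_mul_self_eq h5).mpr (hR.star_mul_eq_zero_symm h1),
    (hR.mul_eq_zero_iff_of_star_mul_self_eq h4.symm).mpr h1,
    (hR.mul_eq_zero_iff_of_star_mul_self_eq h6.symm).mpr h2⟩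

/-- Let `Q` be a unital C*-algebra and `q11, q12, q21, q22 ∈ Q` the matrix
coefficients of a linear τ-preserving action on the graph C*-algebra of the complete graph
on two vertices, so that `q11^* q12 = 0`, `q21^* q22 = 0`, `q11^* q11 = q22 q22^*`,
`q11 q11^* = q22^* q22`, `q21^* q21 = q12 q12^*` and `q21 q21^* = q12^* q12`.
Then `q11 q21 = q21 q11 = q22 q12 = q12 q22 = 0`. -/
theorem complete_graph_coefficients_products_vanish
    (Q : Type*) [NormedRing Q] [StarRing Q] [CStarRing Q] [NormOneClass Q]
    [CompleteSpace Q]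
    (q11 q12 q21 q22 : Q)
    (h1 : star q11 * q12 = 0)
    (h2 : star q21 * q22 = 0)
    (h3 : star q11 * q11 = q22 * star q22)
    (h4 : q11 * star q11 = star q22 * q22)
    (h5 : star q21 * q21 = q12 * star q12)
    (h6 : q21 * star q21 = star q12 * q12) :
    q11 * q21 = 0 ∧ q21 * q11 = 0 ∧ q22 * q12 = 0 ∧ q12 * q22 = 0 :=
  complete_graph_coefficients_products_vanish_general (isProperInvolution_of_cStarRing Q)
    h1 h2 h3 h4 h5 h6
end

section
/- The element a is a normal partial isometry: a^* a = a a^* and a a^* a = a. By symmetry of the hypotheses, the same conclusions hold for b. -/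
theorem mul_eq_mul_of_mul_mul_self_eq_self {S : Type*} [Semigroup S] {a x y : S}
    (hx : x * a * a = a) (hy : a * (a * y) = a) : x * a = a * y :=
  calc
    x * a = x * (a * (a * y)) := by rw [hy]
    _ = x * a * a * y := by simp only [mul_assoc]
    _ = a * y := by rw [hx]

section Semiring

variable {R : Type*} [Semiring R] {a b p q : R}

theorem mul_eq_right_of_add_mul_eq_one (hpq : p + q * b = 1) (hba : b * a = 0) : p * a = a :=
  calc
    p * a = (p + q * b) * a := by rw [add_mul, mul_assoc q, hba, mul_zero, add_zero]
    _ = a := by rw [hpq, one_mul]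

theorem mul_eq_left_of_add_mul_eq_one (hpq : p + b * q = 1) (hab : a * b = 0) : a * p = a :=
  calc
    a * p = a * (p + b * q) := by rw [mul_add, ← mul_assoc a b, hab, zero_mul, add_zero]
    _ = a := by rw [hpq, mul_one]

variable {a' b' : R}

theorem mul_comm_and_mul_mul_eq_self_of_add_eq_one
    (hleft : a' * a + b' * b = 1) (hright : a * a' + b * b' = 1)
    (hab : a * b = 0) (hba : b * a = 0) :
    a' * a = a * a' ∧ a * a' * a = a := by
  have left_fix : a' * a * a = a := mul_eq_right_of_add_mul_eq_one hleft hba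
  have right_fix : a * (a * a') = a := mul_eq_left_of_add_mul_eq_one hright hab
  have comm : a' * a = a * a' := mul_eq_mul_of_mul_mul_self_eq_self left_fix right_fix
  exact ⟨comm, comm ▸ left_fix⟩

/-- Here `a'` and `b'` play the roles of `a^*` and `b^*`. -/
theorem normal_partial_isometry_of_relations_general
    (hleft : a' * a + b' * b = 1) (hright : a * a' + b * b' = 1)
    (hab : a * b = 0) (hba : b * a = 0) :
    (a' * a = a * a' ∧ a * a' * a = a) ∧ (b' * b = b * b' ∧ b * b' * b = b) :=
  ⟨mul_comm_and_mul_mul_eq_self_of_add_eq_one hleft hright hab hba,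
    mul_comm_and_mul_mul_eq_self_of_add_eq_one
      (by rwa [add_comm]) (by rwa [add_comm]) hba hab⟩

end Semiring

/-- Let `Q` be a unital C*-algebra and `a, b ∈ Q` with
`a^* a + b^* b = 1`, `a a^* + b b^* = 1`, `a b = 0` and `b a = 0`.
Then `a` is a normal partial isometry (`a^* a = a a^*` and `a a^* a = a`),
and likewise `b` is a normal partial isometry. -/
theorem normal_partial_isometry_of_relations
    (Q : Type*) [NormedRing Q] [StarRing Q] [CStarRing Q] [NormOneClass Q]
    [CompleteSpace Q]
    (a b : Q)
    (h1 : star a * a + star b * b = 1)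
    (h2 : a * star a + b * star b = 1)
    (h3 : a * b = 0)
    (h4 : b * a = 0) :
    (star a * a = a * star a ∧ a * star a * a = a) ∧
    (star b * b = b * star b ∧ b * star b * b = b) :=
  normal_partial_isometry_of_relations_general h1 h2 h3 h4
end
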